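/- Let (X, H) be a hypothesis class and fix ε with 0 < ε < 1/2. The following are equivalent: (1) the Littlestone dimension of H is finite; (2) the Threshold dimension of H is finite; (3) the ε-virtual Littlestone dimension of H is finite; (4) the ε-virtual Threshold dimension of H is finite; (5) the ε-approximate Littlestone dimension of H is finite. -/

import Mathlib

open scoped Classical

/-- `h` realizes the branch `y` in the binary tree with node labels given by `t`
(the node reached by the bit string `s` is labeled `t s`). -/
def Realizes {X : Type*} (t : List Bool → X) (h : X → Bool) (y : List Bool) : Prop :=
  ∀ i : Fin y.length, h (t (y.take i)) = y.get i

/-- `H` shatters some complete binary mistake tree of depth `d`. -/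
def Shatters {X : Type*} (H : Set (X → Bool)) (d : ℕ) : Prop :=
  ∃ t : List Bool → X, ∀ y : List Bool, y.length = d → ∃ h ∈ H, Realizes t h y

/-- Littlestone dimension: supremum of depths of shattered mistake trees
(`⊥` for the empty class, `⊤` if unbounded). -/
noncomputable def Ldim {X : Type*} (H : Set (X → Bool)) : WithBot ℕ∞ :=
  sSup {d : WithBot ℕ∞ | ∃ n : ℕ, Shatters H n ∧ d = ((n : ℕ∞) : WithBot ℕ∞)}

/-- A finite set `A` of hypotheses is ε-good: every point `x` splits it ε-unevenly. -/
def EpsGoodH {X : Type*} (ε : ℝ) (A : Finset (X → Bool)) : Prop :=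
  ∀ x : X, ((A.filter fun h => h x = true).card : ℝ) < ε * A.card ∨
           ((A.filter fun h => h x = false).card : ℝ) < ε * A.card

/-- A finite set `B ⊆ X` is ε-good w.r.t. the class `H`. -/
def EpsGoodX {X : Type*} (H : Set (X → Bool)) (ε : ℝ) (B : Finset X) : Prop :=
  ∀ h ∈ H, ((B.filter fun b => h b = true).card : ℝ) < ε * B.card ∨
           ((B.filter fun b => h b = false).card : ℝ) < ε * B.card

/-- The majority opinion `t(h,B)`: `true` iff `h` is `0` on `< ε|B|` of `B`. -/
noncomputable def tb {X : Type*} (ε : ℝ) (h : X → Bool) (B : Finset X) : Bool :=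
  if ((B.filter fun b => h b = false).card : ℝ) < ε * B.card then true else false

/-- A finite set `A` of hypotheses is ε-excellent w.r.t. `H`: every ε-good
`B ⊆ X` splits `A` ε-unevenly according to the majority opinions `t(·,B)`. -/
def EpsExcellent {X : Type*} (H : Set (X → Bool)) (ε : ℝ) (A : Finset (X → Bool)) : Prop :=
  ∀ B : Finset X, B.Nonempty → EpsGoodX H ε B →
    ((A.filter fun h => tb ε h B = true).card : ℝ) < ε * A.card ∨
    ((A.filter fun h => tb ε h B = false).card : ℝ) < ε * A.card

/-- `H` has a threshold (half-graph) configuration of size `k`. -/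
def ThresholdAt {X : Type*} (H : Set (X → Bool)) (k : ℕ) : Prop :=
  ∃ (x : Fin k → X) (h : Fin k → (X → Bool)),
    (∀ j, h j ∈ H) ∧ ∀ i j, (h j (x i) = true ↔ i < j)

/-- `H` shatters a complete binary tree of depth `ℓ` whose nodes are labeled by
ε-virtual elements (finite nonempty ε-good subsets of `X`), realization via `t(·,·)`. -/
def VirtShatters {X : Type*} (H : Set (X → Bool)) (ε : ℝ) (ℓ : ℕ) : Prop :=
  ∃ t : List Bool → Finset X,
    (∀ s : List Bool, s.length < ℓ → (t s).Nonempty ∧ EpsGoodX H ε (t s)) ∧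
    ∀ y : List Bool, y.length = ℓ → ∃ h ∈ H,
      ∀ i : Fin y.length, tb ε h (t (y.take i)) = y.get i

/-- `H` has an ε-virtual threshold configuration of size `k`: distinct virtual elements
`B_1,…,B_k` and distinct `h_1,…,h_k ∈ H` with `t(h_j, B_i) = 1` iff `i < j`. -/
def VirtThresholdAt {X : Type*} (H : Set (X → Bool)) (ε : ℝ) (k : ℕ) : Prop :=
  ∃ (B : Fin k → Finset X) (h : Fin k → (X → Bool)),
    Function.Injective B ∧ Function.Injective h ∧
    (∀ i, (B i).Nonempty ∧ EpsGoodX H ε (B i)) ∧ (∀ j, h j ∈ H) ∧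
    ∀ i j, (tb ε (h j) (B i) = true ↔ i < j)

/-- `H` ε-approximately shatters a complete `X`-labeled binary tree of depth `ℓ`:
every branch is realized by some `h ∈ H` up to `< ε·ℓ` mistakes. -/
def ApproxShatters {X : Type*} (H : Set (X → Bool)) (ε : ℝ) (ℓ : ℕ) : Prop :=
  ∃ t : List Bool → X, ∀ y : List Bool, y.length = ℓ → ∃ h ∈ H,
    ((Finset.univ.filter fun i : Fin y.length =>
        h (t (y.take i)) ≠ y.get i).card : ℝ) < ε * ℓ


/-- Recursive Littlestone rank: a tree with node labels in `P`. -/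
def LDr {X : Type*} (P : Set X) : ℕ → Set (X → Bool) → Prop
  | 0, H => H.Nonempty
  | n + 1, H => ∃ x ∈ P, ∀ b : Bool, LDr P n {h ∈ H | h x = b}

theorem LDr_mono {X : Type*} {P : Set X} : ∀ {n : ℕ} {H H' : Set (X → Bool)},
    H ⊆ H' → LDr P n H → LDr P n H'
  | 0, _, _, hs, h => h.mono hs
  | n + 1, _, _, hs, ⟨x, hx, hb⟩ =>
    ⟨x, hx, fun b => LDr_mono (fun _ hh => ⟨hs hh.1, hh.2⟩) (hb b)⟩

theorem LDr_nonempty {X : Type*} {P : Set X} : ∀ {n : ℕ} {H : Set (X → Bool)},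
    LDr P n H → H.Nonempty
  | 0, _, h => h
  | n + 1, _, ⟨_, _, hb⟩ => (LDr_nonempty (hb true)).mono (fun _ hh => hh.1)

theorem LDr_le {X : Type*} {P : Set X} : ∀ {n m : ℕ} {H : Set (X → Bool)}, n ≤ m →
    LDr P m H → LDr P n H
  | 0, _, _, _, h => LDr_nonempty h
  | n + 1, 0, _, hm, _ => by omega
  | n + 1, m + 1, _, hm, ⟨x, hx, hb⟩ => ⟨x, hx, fun b => LDr_le (by omega) (hb b)⟩

theorem realizes_cons {X : Type*} (t : List Bool → X) (h : X → Bool) (b : Bool) (y : List Bool) :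
    Realizes t h (b :: y) ↔ h (t []) = b ∧ Realizes (fun s => t (b :: s)) h y := by
  unfold Realizes
  exact Fin.forall_fin_succ

theorem shatters_LDr {X : Type*} : ∀ (n : ℕ) (H : Set (X → Bool)),
    Shatters H n → LDr Set.univ n H
  | 0, H, ⟨t, ht⟩ => by
    obtain ⟨h, hh, _⟩ := ht [] rfl
    exact ⟨h, hh⟩
  | n + 1, H, ⟨t, ht⟩ => by
    refine ⟨t [], trivial, fun b => shatters_LDr n _ ⟨fun s => t (b :: s), fun y hy => ?_⟩⟩
    obtain ⟨h, hh, hr⟩ := ht (b :: y) (by simp [hy])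
    rw [realizes_cons] at hr
    exact ⟨h, ⟨hh, hr.1⟩, hr.2⟩

theorem LDr_shatters {X : Type*} [Nonempty X] : ∀ (n : ℕ) (H : Set (X → Bool)),
    LDr Set.univ n H → Shatters H n
  | 0, H, ⟨h, hh⟩ => by
    refine ⟨fun _ => Classical.arbitrary X, fun y hy => ⟨h, hh, ?_⟩⟩
    obtain rfl := List.length_eq_zero_iff.1 hy
    exact fun i => i.elim0
  | n + 1, H, ⟨x, _, hb⟩ => by
    choose t ht using fun b => LDr_shatters n _ (hb b)
    let T : List Bool → X := fun s => match s with
      | [] => x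
      | b :: s => t b s
    refine ⟨T, fun y hy => ?_⟩
    match y, hy with
    | b :: y, hy =>
      obtain ⟨h, hh, hr⟩ := ht b y (by simpa using hy)
      exact ⟨h, hh.1, (realizes_cons _ _ _ _).2 ⟨hh.2, hr⟩⟩

/-- Two-colour Ramsey property of trees. -/
theorem LDr_ramsey {X : Type*} {P A B : Set X} (hP : P ⊆ A ∪ B) :
    ∀ (n a b : ℕ) (H : Set (X → Bool)), n = a + b → LDr P n H → LDr A a H ∨ LDr B b H
  | _, 0, _, _, _, h => Or.inl (LDr_nonempty h)
  | _, a + 1, 0, _, _, h => Or.inr (LDr_nonempty h)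
  | 0, a + 1, b + 1, _, hn, _ => by omega
  | n + 1, a + 1, b + 1, H, hn, ⟨x, hx, hb⟩ => by
    rcases hP hx with hA | hB
    · by_cases hc : ∃ c, LDr B (b + 1) {h ∈ H | h x = c}
      · obtain ⟨c, hc⟩ := hc
        exact Or.inr (LDr_mono (fun _ hh => hh.1) hc)
      · push Not at hc
        exact Or.inl ⟨x, hA, fun c =>
          (LDr_ramsey hP n a (b + 1) _ (by omega) (hb c)).resolve_right (hc c)⟩
    · by_cases hc : ∃ c, LDr A (a + 1) {h ∈ H | h x = c}
      · obtain ⟨c, hc⟩ := hc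
        exact Or.inl (LDr_mono (fun _ hh => hh.1) hc)
      · push Not at hc
        exact Or.inr ⟨x, hB, fun c =>
          (LDr_ramsey hP n (a + 1) b _ (by omega) (hb c)).resolve_left (hc c)⟩

/-- One-colour chains. -/
def Chn {X : Type*} (c : Bool) : ℕ → Set X → Set (X → Bool) → Prop
  | 0, _, _ => True
  | n + 1, P, H => ∃ h ∈ H, ∃ x ∈ P, h x = c ∧
      Chn c n {z ∈ P | h z = c} {h' ∈ H | h' x = !c}

theorem Chn_mono {X : Type*} {c : Bool} : ∀ {n : ℕ} {P P' : Set X} {H H' : Set (X → Bool)},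
    P ⊆ P' → H ⊆ H' → Chn c n P H → Chn c n P' H'
  | 0, _, _, _, _, _, _, _ => trivial
  | _ + 1, _, _, _, _, hP, hH, ⟨h, hh, x, hx, hc, hr⟩ =>
    ⟨h, hH hh, x, hP hx, hc,
      Chn_mono (fun _ hz => ⟨hP hz.1, hz.2⟩) (fun _ hz => ⟨hH hz.1, hz.2⟩) hr⟩

/-- Depth bound. -/
def fb : ℕ → ℕ
  | 0 => 0
  | n + 1 => (fb n + 1) + (fb n + 1)

theorem LDr_chain {X : Type*} : ∀ (n p q : ℕ) (P : Set X) (H : Set (X → Bool)), n = p + q →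
    LDr P (fb n) H → Chn false p P H ∨ Chn true q P H
  | _, 0, _, _, _, _, _ => Or.inl trivial
  | _, _ + 1, 0, _, _, _, _ => Or.inr trivial
  | 0, p + 1, q + 1, _, _, hn, _ => by omega
  | n + 1, p + 1, q + 1, P, H, hn, hL => by
    obtain ⟨h, hh⟩ := LDr_nonempty hL
    have hcov : P ⊆ {z ∈ P | h z = false} ∪ {z ∈ P | h z = true} := by
      intro z hz
      cases hzz : h z
      · exact Or.inl ⟨hz, hzz⟩
      · exact Or.inr ⟨hz, hzz⟩
    rcases LDr_ramsey hcov _ (fb n + 1) (fb n + 1) H rfl hL with hA | hA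
    · obtain ⟨x, hx, hb⟩ := hA
      rcases LDr_chain n p (q + 1) _ _ (by omega) (hb true) with h1 | h1
      · exact Or.inl ⟨h, hh, x, hx.1, hx.2, h1⟩
      · exact Or.inr (Chn_mono (fun _ hz => hz.1) (fun _ hz => hz.1) h1)
    · obtain ⟨x, hx, hb⟩ := hA
      rcases LDr_chain n (p + 1) q _ _ (by omega) (hb false) with h1 | h1
      · exact Or.inl (Chn_mono (fun _ hz => hz.1) (fun _ hz => hz.1) h1)
      · exact Or.inr ⟨h, hh, x, hx.1, hx.2, h1⟩

theorem Chn_seq {X : Type*} [Nonempty X] {c : Bool} : ∀ (n : ℕ) (P : Set X) (H : Set (X → Bool)),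
    Chn c n P H → ∃ (x : ℕ → X) (h : ℕ → X → Bool), (∀ i < n, x i ∈ P ∧ h i ∈ H) ∧
      ∀ i < n, ∀ j < n, h j (x i) = if i < j then !c else c
  | 0, _, _, _ => ⟨fun _ => Classical.arbitrary X, fun _ _ => true, by simp, by simp⟩
  | n + 1, P, H, ⟨h, hh, x, hx, hc, hr⟩ => by
    obtain ⟨xs, hs, h1, h2⟩ := Chn_seq n _ _ hr
    refine ⟨fun i => Nat.casesOn i x xs, fun i => Nat.casesOn i h hs, ?_, ?_⟩
    · rintro (_ | i) hi
      · exact ⟨hx, hh⟩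
      · exact ⟨(h1 i (by omega)).1.1, (h1 i (by omega)).2.1⟩
    · rintro (_ | i) hi (_ | j) hj
      · simpa using hc
      · simpa using (h1 j (by omega)).2.2
      · simpa using (h1 i (by omega)).1.2
      · simpa using h2 i (by omega) j (by omega)

theorem LDr_threshold {X : Type*} [Nonempty X] (H : Set (X → Bool)) (m : ℕ)
    (hL : LDr Set.univ (fb (m + (m + 1))) H) : ThresholdAt H m := by
  rcases LDr_chain _ m (m + 1) _ _ rfl hL with h | h
  · obtain ⟨x, h, h1, h2⟩ := Chn_seq _ _ _ h
    refine ⟨fun i => x i, fun j => h j, fun j => (h1 j j.2).2, fun i j => ?_⟩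
    simp only []
    rw [h2 i i.2 j j.2, Fin.lt_def]
    by_cases hij : (i : ℕ) < j <;> simp [hij]
  · obtain ⟨x, h, h1, h2⟩ := Chn_seq _ _ _ h
    refine ⟨fun i => x (m - 1 - i), fun j => h (m - j), fun j => (h1 _ (by omega)).2,
      fun i j => ?_⟩
    have := i.2
    have := j.2
    simp only []
    rw [h2 (m - 1 - i) (by omega) (m - j) (by omega), Fin.lt_def]
    by_cases hij : (i : ℕ) < j
    · rw [if_neg (by omega)]; simp [hij]
    · rw [if_pos (by omega)]; simp [hij]

theorem seq_LDr {X : Type*} (x : ℕ → X) (h : ℕ → X → Bool) : ∀ (n a : ℕ) (H : Set (X → Bool)),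
    (∀ j, a ≤ j → j < a + 2 ^ n → h j ∈ H) →
    (∀ i j, a ≤ i → i < a + 2 ^ n → a ≤ j → j < a + 2 ^ n → (h j (x i) = true ↔ i < j)) →
    LDr Set.univ n H
  | 0, a, H, h1, _ => ⟨h a, h1 a le_rfl (by simp)⟩
  | n + 1, a, H, h1, h2 => by
    have hp : 0 < 2 ^ n := by positivity
    rw [pow_succ] at h1 h2
    refine ⟨x (a + 2 ^ n - 1), trivial, fun b => ?_⟩
    cases b
    · refine seq_LDr x h n a _ (fun j hj hj' => ⟨h1 j hj (by omega), ?_⟩)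
        (fun i j hi hi' hj hj' => h2 i j hi (by omega) hj (by omega))
      rw [← Bool.not_eq_true, h2 _ j (by omega) (by omega) (by omega) (by omega)]
      omega
    · refine seq_LDr x h n (a + 2 ^ n) _ (fun j hj hj' => ⟨h1 j (by omega) (by omega), ?_⟩)
        (fun i j hi hi' hj hj' => h2 i j (by omega) (by omega) (by omega) (by omega))
      rw [h2 _ j (by omega) (by omega) (by omega) (by omega)]
      omega

theorem threshold_LDr {X : Type*} (H : Set (X → Bool)) (n m : ℕ) (hm : 2 ^ n ≤ m)
    (hT : ThresholdAt H m) : LDr Set.univ n H := by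
  obtain ⟨x, h, h1, h2⟩ := hT
  have hp : 0 < 2 ^ n := by positivity
  have hm0 : 0 < m := by omega
  refine seq_LDr (fun i => x ⟨i % m, Nat.mod_lt _ hm0⟩) (fun i => h ⟨i % m, Nat.mod_lt _ hm0⟩)
    n 0 H (fun j _ _ => h1 _) (fun i j _ hi _ hj => ?_)
  rw [h2, Fin.lt_def]
  simp only
  rw [Nat.mod_eq_of_lt (by omega), Nat.mod_eq_of_lt (by omega)]

theorem Ldim_ne_top_iff {X : Type*} [Nonempty X] (H : Set (X → Bool)) :
    Ldim H ≠ ⊤ ↔ ∃ d : ℕ, ¬ LDr Set.univ d H := by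
  constructor
  · intro h
    by_contra! hc
    apply h
    unfold Ldim
    rw [sSup_eq_top]
    intro b hb
    induction b using WithBot.recBotCoe with
    | bot => exact ⟨_, ⟨0, LDr_shatters _ _ (hc 0), rfl⟩, WithBot.bot_lt_coe _⟩
    | coe b =>
      have hb' : b ≠ ⊤ := fun e => by subst e; exact lt_irrefl _ hb
      lift b to ℕ using hb'
      refine ⟨_, ⟨b + 1, LDr_shatters _ _ (hc _), rfl⟩, ?_⟩
      exact_mod_cast Nat.lt_succ_self b
  · rintro ⟨d, hd⟩ ht
    have : Ldim H ≤ ((d : ℕ∞) : WithBot ℕ∞) := by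
      unfold Ldim
      apply sSup_le
      rintro _ ⟨n, hn, rfl⟩
      have : n ≤ d := by
        by_contra! hlt
        exact hd (LDr_le hlt.le (shatters_LDr _ _ hn))
      exact_mod_cast this
    rw [ht, top_le_iff] at this
    have h2 : (d : ℕ∞) = ⊤ := WithBot.coe_injective this
    exact ENat.coe_ne_top d h2

theorem threshold_bdd_iff {X : Type*} [Nonempty X] (H : Set (X → Bool)) :
    (∃ k : ℕ, ∀ m : ℕ, ThresholdAt H m → m ≤ k) ↔ ∃ d : ℕ, ¬ LDr Set.univ d H := by
  constructor
  · rintro ⟨k, hk⟩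
    refine ⟨fb (k + 1 + (k + 1 + 1)), fun hL => ?_⟩
    have := hk _ (LDr_threshold H (k + 1) hL)
    omega
  · rintro ⟨d, hd⟩
    refine ⟨2 ^ d, fun m hm => ?_⟩
    by_contra! hlt
    exact hd (threshold_LDr H d m hlt.le hm)

/-- Sum over all bit strings of length `n`. -/
def BS : ℕ → (List Bool → ℝ) → ℝ
  | 0, f => f []
  | n + 1, f => BS n (fun y => f (false :: y)) + BS n (fun y => f (true :: y))

theorem BS_mono : ∀ (n : ℕ) (f g : List Bool → ℝ), (∀ y, y.length = n → f y ≤ g y) →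
    BS n f ≤ BS n g
  | 0, f, g, h => h [] rfl
  | n + 1, f, g, h => add_le_add (BS_mono n _ _ fun y hy => h _ (by simp [hy]))
      (BS_mono n _ _ fun y hy => h _ (by simp [hy]))

theorem BS_add : ∀ (n : ℕ) (f g : List Bool → ℝ), BS n (fun y => f y + g y) = BS n f + BS n g
  | 0, f, g => rfl
  | n + 1, f, g => by simp only [BS]; rw [BS_add n, BS_add n]; ring

theorem BS_smul : ∀ (n : ℕ) (a : ℝ) (f : List Bool → ℝ), BS n (fun y => a * f y) = a * BS n f
  | 0, a, f => rfl
  | n + 1, a, f => by simp only [BS]; rw [BS_smul n, BS_smul n]; ring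

theorem BS_const : ∀ (n : ℕ) (a : ℝ), BS n (fun _ => a) = 2 ^ n * a
  | 0, a => by simp [BS]
  | n + 1, a => by simp only [BS]; rw [BS_const n]; ring

theorem BS_sum {ι : Type*} (n : ℕ) (s : Finset ι) (f : ι → List Bool → ℝ) :
    BS n (fun y => ∑ x ∈ s, f x y) = ∑ x ∈ s, BS n (f x) := by
  induction s using Finset.induction_on with
  | empty => simp [BS_const]
  | insert a s ha ih => simp only [Finset.sum_insert ha]; rw [BS_add, ih]

/-- Single-step weight. -/
noncomputable def om (l : ℝ) (b c : Bool) : ℝ := if b = c then 1 else l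

/-- Average weight at a node. -/
noncomputable def av {X : Type*} (l : ℝ) (B : Finset X) (h : X → Bool) (c : Bool) : ℝ :=
  (B.card : ℝ)⁻¹ * ∑ x ∈ B, om l (h x) c

/-- Weight of a branch. -/
noncomputable def wt {X : Type*} (l : ℝ) (T : List Bool → Finset X) (h : X → Bool)
    (y : List Bool) : ℝ :=
  ∏ i : Fin y.length, av l (T (y.take i)) h (y.get i)

theorem wt_cons {X : Type*} (l : ℝ) (T : List Bool → Finset X) (h : X → Bool) (c : Bool)
    (y : List Bool) :
    wt l T h (c :: y) = av l (T []) h c * wt l (fun s => T (c :: s)) h y := by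
  unfold wt
  exact Fin.prod_univ_succ _

theorem wt_split {X : Type*} (l : ℝ) (T : List Bool → Finset X) (S : List Bool → Prop)
    (g : List Bool → X → Bool) (c : Bool) (y : List Bool) :
    (if S (c :: y) then wt l T (g (c :: y)) (c :: y) else 0) =
    ((T []).card : ℝ)⁻¹ * ∑ x ∈ T [],
      (om l false c * (if S (c :: y) ∧ g (c :: y) x = false then
          wt l (fun s => T (c :: s)) (g (c :: y)) y else 0) +
       om l true c * (if S (c :: y) ∧ g (c :: y) x = true then
          wt l (fun s => T (c :: s)) (g (c :: y)) y else 0)) := by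
  by_cases hS : S (c :: y)
  · simp only [hS, if_true, true_and]
    rw [wt_cons, av, mul_assoc, Finset.sum_mul]
    congr 1
    refine Finset.sum_congr rfl fun x _ => ?_
    cases g (c :: y) x <;> simp
  · simp [hS]

theorem BS_split {X : Type*} (l : ℝ) (n : ℕ) (T : List Bool → Finset X) (S : List Bool → Prop)
    (g : List Bool → X → Bool) (c : Bool) :
    BS n (fun y => if S (c :: y) then wt l T (g (c :: y)) (c :: y) else 0) =
    ((T []).card : ℝ)⁻¹ * ∑ x ∈ T [],
      (om l false c * BS n (fun y => if S (c :: y) ∧ g (c :: y) x = false then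
          wt l (fun s => T (c :: s)) (g (c :: y)) y else 0) +
       om l true c * BS n (fun y => if S (c :: y) ∧ g (c :: y) x = true then
          wt l (fun s => T (c :: s)) (g (c :: y)) y else 0)) := by
  simp only [wt_split]
  rw [BS_smul, BS_sum]
  congr 1
  refine Finset.sum_congr rfl fun x _ => ?_
  rw [BS_add, BS_smul, BS_smul]

theorem BS_bound {X : Type*} (l : ℝ) (hl : 0 ≤ l) : ∀ (n d : ℕ) (H : Set (X → Bool))
    (T : List Bool → Finset X) (S : List Bool → Prop) (g : List Bool → X → Bool),
    ¬ LDr Set.univ d H → (∀ y, S y → g y ∈ H) →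
    BS n (fun y => if S y then wt l T (g y) y else 0) ≤ ((n : ℝ) + 1) ^ d * (1 + l) ^ n := by
  intro n
  induction n with
  | zero =>
    intro d H T S g hd hS
    simp only [BS]
    split_ifs <;> simp [wt]
  | succ n ih =>
    intro d H T S g hd hS
    cases d with
    | zero =>
      have hno : ∀ y, ¬ S y := fun y hy => hd ⟨g y, hS y hy⟩
      simp only [hno, if_false]
      rw [BS_const]
      simp only [mul_zero]
      positivity
    | succ d =>
      simp only [BS]
      rw [BS_split, BS_split, ← mul_add, ← Finset.sum_add_distrib]
      set C : ℝ := ((n : ℝ) + 1) ^ (d + 1) * (1 + l) ^ (n + 1) +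
        ((n : ℝ) + 1) ^ d * (1 + l) ^ (n + 1) with hC
      have hCb : C ≤ (((n + 1 : ℕ) : ℝ) + 1) ^ (d + 1) * (1 + l) ^ (n + 1) := by
        rw [hC, ← add_mul]
        gcongr
        push_cast
        have h1 : ((n : ℝ) + 1) ^ d ≤ ((n : ℝ) + 1 + 1) ^ d := by gcongr; linarith
        calc ((n : ℝ) + 1) ^ (d + 1) + ((n : ℝ) + 1) ^ d
            = ((n : ℝ) + 1) ^ d * ((n : ℝ) + 1 + 1) := by ring
          _ ≤ ((n : ℝ) + 1 + 1) ^ d * ((n : ℝ) + 1 + 1) := by gcongr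
          _ = _ := by ring
      have hC0 : 0 ≤ C := by positivity
      refine le_trans ?_ hCb
      have fin : ((T []).card : ℝ)⁻¹ * ∑ x ∈ T [], C ≤ C := by
        calc _ = (((T []).card : ℝ)⁻¹ * (T []).card) * C := by
              rw [Finset.sum_const, nsmul_eq_mul, mul_assoc]
          _ ≤ 1 * C := by
              refine mul_le_mul_of_nonneg_right ?_ hC0
              exact inv_mul_le_one
          _ = C := one_mul C
      refine le_trans (mul_le_mul_of_nonneg_left (Finset.sum_le_sum fun x _ => ?_)
        (by positivity)) fin
      have key : ∀ (b c : Bool) (e : ℕ), ¬ LDr Set.univ e {h ∈ H | h x = b} →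
          BS n (fun y => if S (c :: y) ∧ g (c :: y) x = b then
            wt l (fun s => T (c :: s)) (g (c :: y)) y else 0) ≤
            ((n : ℝ) + 1) ^ e * (1 + l) ^ n := fun b c e he => by
        have := ih e _ (fun s => T (c :: s)) (fun y => S (c :: y) ∧ g (c :: y) x = b)
          (fun y => g (c :: y)) he (fun y hy => ⟨hS _ hy.1, hy.2⟩)
        convert this
      have hbig : ∀ b, ¬ LDr Set.univ (d + 1) {h ∈ H | h x = b} := fun b hb =>
        hd (LDr_mono (fun _ hh => hh.1) hb)
      have hone : ∃ b, ¬ LDr Set.univ d {h ∈ H | h x = b} := by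
        by_contra! hc
        exact hd ⟨x, trivial, hc⟩
      obtain ⟨b, hb⟩ := hone
      have k1 := key b false d hb
      have k2 := key b true d hb
      have k3 := key (!b) false _ (hbig _)
      have k4 := key (!b) true _ (hbig _)
      rw [hC, pow_succ (1 + l) n]
      have e1 := mul_le_mul_of_nonneg_left k1 hl
      have e2 := mul_le_mul_of_nonneg_left k2 hl
      have e3 := mul_le_mul_of_nonneg_left k3 hl
      have e4 := mul_le_mul_of_nonneg_left k4 hl
      cases b <;> simp only [om, Bool.not_false, Bool.not_true, if_true, reduceIte,
        Bool.false_eq_true, Bool.true_eq_false, reduceCtorEq] at * <;> linarith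

theorem BS_use {X : Type*} (l : ℝ) (hl : 0 ≤ l) (n d : ℕ) (H : Set (X → Bool))
    (T : List Bool → Finset X) (hd : ¬ LDr Set.univ d H) (a : ℝ)
    (hT : ∀ y : List Bool, y.length = n → ∃ h ∈ H, a ≤ wt l T h y) :
    2 ^ n * a ≤ ((n : ℝ) + 1) ^ d * (1 + l) ^ n := by
  have hT' : ∀ y : List Bool, ∃ h : X → Bool, y.length = n → h ∈ H ∧ a ≤ wt l T h y := by
    intro y
    by_cases hy : y.length = n
    · obtain ⟨h, h1, h2⟩ := hT y hy
      exact ⟨h, fun _ => ⟨h1, h2⟩⟩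
    · exact ⟨fun _ => true, fun h => absurd h hy⟩
  choose g hg using hT'
  refine le_trans ?_ (BS_bound l hl n d H T (fun y => y.length = n) g hd fun y hy => (hg y hy).1)
  rw [← BS_const]
  refine BS_mono _ _ _ fun y hy => ?_
  rw [if_pos hy]
  exact (hg y hy).2

theorem growth (r : ℝ) (hr : 1 < r) (d : ℕ) :
    ∃ k : ℕ, ∀ m : ℕ, r ^ m ≤ ((m : ℝ) + 1) ^ d → m ≤ k := by
  have h := tendsto_pow_const_div_const_pow_of_one_lt d hr
  have hr0 : 0 < r := by linarith
  have h2 := h.eventually (gt_mem_nhds (show (0 : ℝ) < 1 / r by positivity))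
  obtain ⟨k, hk⟩ := Filter.eventually_atTop.1 h2
  refine ⟨k, fun m hm => ?_⟩
  by_contra! hlt
  have h3 := hk (m + 1) (by omega)
  rw [div_lt_div_iff₀ (by positivity) hr0, pow_succ r m] at h3
  push_cast at h3
  nlinarith

theorem tb_count {X : Type*} {H : Set (X → Bool)} {ε : ℝ} {B : Finset X} {h : X → Bool}
    (hh : h ∈ H) (hB : EpsGoodX H ε B) (c : Bool) (hc : tb ε h B = c) :
    ((B.filter fun b => h b = !c).card : ℝ) < ε * B.card := by
  unfold tb at hc
  cases c
  · split_ifs at hc with h1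
    exact (hB h hh).resolve_right h1
  · split_ifs at hc with h1
    exact h1

theorem av_ge {X : Type*} {H : Set (X → Bool)} {ε : ℝ} {B : Finset X} {h : X → Bool}
    (hh : h ∈ H) (hn : B.Nonempty) (hB : EpsGoodX H ε B) (c : Bool) (hc : tb ε h B = c) :
    1 - ε ≤ av 0 B h c := by
  have h1 := tb_count hh hB c hc
  have hp : (0 : ℝ) < B.card := by exact_mod_cast hn.card_pos
  have h2 : ∑ x ∈ B, om 0 (h x) c = ((B.filter fun b => h b = c).card : ℝ) := by
    simp [om, Finset.sum_ite]
  have h3 : ((B.filter fun b => h b = c).card : ℝ) + ((B.filter fun b => h b = !c).card : ℝ)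
      = B.card := by
    rw [← Finset.card_filter_add_card_filter_not (s := B) (fun b => h b = c)]
    push_cast
    congr 3
    ext b
    cases h b <;> cases c <;> simp
  unfold av
  rw [h2, inv_mul_eq_div, le_div_iff₀ hp]
  linarith

theorem virt_bdd {X : Type*} (H : Set (X → Bool)) (ε : ℝ) (hε : ε < 1/2) (d : ℕ)
    (hd : ¬ LDr Set.univ d H) : ∃ k : ℕ, ∀ m : ℕ, VirtShatters H ε m → m ≤ k := by
  obtain ⟨k, hk⟩ := growth (2 * (1 - ε)) (by linarith) d
  refine ⟨k, fun m hm => hk m ?_⟩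
  obtain ⟨T, hT, hs⟩ := hm
  have := BS_use 0 le_rfl m d H T hd ((1 - ε) ^ m) fun y hy => by
    obtain ⟨h, hh, hr⟩ := hs y hy
    refine ⟨h, hh, ?_⟩
    have hc : (1 - ε) ^ m = ∏ i : Fin y.length, (1 - ε) := by simp [hy]
    rw [hc, wt]
    refine Finset.prod_le_prod (fun _ _ => by linarith) fun i _ => ?_
    have hi := hT (y.take i) (by have := i.2; simp; omega)
    exact av_ge hh hi.1 hi.2 _ (hr i)
  rw [mul_pow]
  simpa using this

theorem approx_bdd {X : Type*} (H : Set (X → Bool)) (ε : ℝ) (hε : ε < 1/2) (d : ℕ)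
    (hd : ¬ LDr Set.univ d H) : ∃ k : ℕ, ∀ m : ℕ, ApproxShatters H ε m → m ≤ k := by
  set s : ℝ := min 1 (1 - 2 * ε) with hs
  have hs0 : 0 < s := lt_min one_pos (by linarith)
  have hs1 : s ≤ 1 := min_le_left _ _
  have hs2 : s ≤ 1 - 2 * ε := min_le_right _ _
  have e1 : Real.exp (-s) ≤ 1 - s + s ^ 2 / 2 := by
    have hq := Real.quadratic_le_exp_of_nonneg hs0.le
    rw [Real.exp_neg]
    rw [inv_le_comm₀ (Real.exp_pos _) (by nlinarith)]
    refine le_trans ?_ hq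
    rw [inv_le_iff_one_le_mul₀ (by nlinarith)]
    nlinarith [pow_pos hs0 4, sq_nonneg (s^2)]
  have e2 : 1 - s * ε ≤ Real.exp (-(s * ε)) := by
    have := Real.add_one_le_exp (-(s * ε)); linarith
  have hr : 1 < 2 * Real.exp (-(s * ε)) / (1 + Real.exp (-s)) := by
    rw [one_lt_div (by positivity)]
    nlinarith
  obtain ⟨k, hk⟩ := growth _ hr d
  refine ⟨k, fun m hm => hk m ?_⟩
  obtain ⟨t, ht⟩ := hm
  have := BS_use (Real.exp (-s)) (Real.exp_pos _).le m d H (fun s => {t s}) hd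
    (Real.exp (-(s * ε)) ^ m) fun y hy => by
    obtain ⟨h, hh, hr⟩ := ht y hy
    refine ⟨h, hh, ?_⟩
    have hw : wt (Real.exp (-s)) (fun s => {t s}) h y = Real.exp (-s) ^
        (Finset.univ.filter fun i : Fin y.length => h (t (y.take i)) ≠ y.get i).card := by
      simp [wt, av, om, Finset.prod_ite]
    rw [hw, ← Real.exp_nat_mul, ← Real.exp_nat_mul, Real.exp_le_exp]
    nlinarith
  rw [div_pow, mul_pow, div_le_iff₀ (by positivity)]
  exact this

theorem good_singleton {X : Type*} (H : Set (X → Bool)) (ε : ℝ) (hε0 : 0 < ε) (x : X) :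
    EpsGoodX H ε {x} := by
  intro h _
  cases hx : h x
  · left; simp [Finset.filter_singleton, hx, hε0]
  · right; simp [Finset.filter_singleton, hx, hε0]

theorem tb_singleton {X : Type*} (ε : ℝ) (hε0 : 0 < ε) (hε : ε < 1/2) (h : X → Bool) (x : X) :
    tb ε h {x} = h x := by
  unfold tb
  cases hx : h x
  · simp [Finset.filter_singleton, hx]; linarith
  · simp [Finset.filter_singleton, hx, hε0]

/-- The type of virtual elements. -/
abbrev VE {X : Type*} (H : Set (X → Bool)) (ε : ℝ) : Type _ :=
  {B : Finset X // B.Nonempty ∧ EpsGoodX H ε B}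

theorem virt_threshold {X : Type*} (H : Set (X → Bool)) (ε : ℝ)
    (hb : ∃ k : ℕ, ∀ m : ℕ, VirtShatters H ε m → m ≤ k) :
    ∃ k : ℕ, ∀ m : ℕ, VirtThresholdAt H ε m → m ≤ k := by
  by_cases hne : Nonempty (VE H ε)
  · obtain ⟨k, hk⟩ := hb
    let H' : Set (VE H ε → Bool) := (fun h B => tb ε h B.1) '' H
    have : ∃ d : ℕ, ¬ LDr Set.univ d H' := by
      refine ⟨k + 1, fun hL => ?_⟩
      obtain ⟨t, ht⟩ := LDr_shatters _ _ hL
      have := hk (k + 1) ⟨fun s => (t s).1, fun s _ => (t s).2, fun y hy => by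
        obtain ⟨_, ⟨h, hh, rfl⟩, hr⟩ := ht y hy
        exact ⟨h, hh, hr⟩⟩
      omega
    obtain ⟨k', hk'⟩ := (threshold_bdd_iff H').2 this
    refine ⟨k', fun m ⟨B, h, _, _, hB, hh, hr⟩ => hk' m
      ⟨fun i => ⟨B i, hB i⟩, fun j => fun B => tb ε (h j) B.1, fun j => ⟨h j, hh j, rfl⟩, hr⟩⟩
  · refine ⟨0, fun m ⟨B, h, _, _, hB, _⟩ => ?_⟩
    by_contra! hm
    exact hne ⟨⟨B ⟨0, hm⟩, hB _⟩⟩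

theorem threshold_virt {X : Type*} (H : Set (X → Bool)) (ε : ℝ) (hε0 : 0 < ε) (hε : ε < 1/2)
    (m : ℕ) (hT : ThresholdAt H m) : VirtThresholdAt H ε m := by
  obtain ⟨x, h, hh, hr⟩ := hT
  refine ⟨fun i => {x i}, h, ?_, ?_, fun i => ⟨by simp, good_singleton H ε hε0 _⟩, hh, ?_⟩
  · intro i j hij
    have hx : x i = x j := by simpa using hij
    by_contra hne
    rcases lt_or_gt_of_ne hne with h1 | h1
    · have := (hr i j).2 h1
      rw [hx, hr] at this
      exact lt_irrefl _ this
    · have := (hr j i).2 h1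
      rw [← hx, hr] at this
      exact lt_irrefl _ this
  · intro i j hij
    by_contra hne
    rcases lt_or_gt_of_ne hne with h1 | h1
    · have := (hr i j).2 h1
      rw [← hij, hr] at this
      exact lt_irrefl _ this
    · have := (hr j i).2 h1
      rw [hij, hr] at this
      exact lt_irrefl _ this
  · intro i j
    rw [tb_singleton ε hε0 hε]
    exact hr i j

theorem shatters_virt {X : Type*} (H : Set (X → Bool)) (ε : ℝ) (hε0 : 0 < ε) (hε : ε < 1/2)
    (m : ℕ) (hT : Shatters H m) : VirtShatters H ε m := by
  obtain ⟨t, ht⟩ := hT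
  refine ⟨fun s => {t s}, fun s _ => ⟨by simp, good_singleton H ε hε0 _⟩, fun y hy => ?_⟩
  obtain ⟨h, hh, hr⟩ := ht y hy
  refine ⟨h, hh, fun i => ?_⟩
  rw [tb_singleton ε hε0 hε]
  exact hr i

theorem shatters_approx {X : Type*} (H : Set (X → Bool)) (ε : ℝ) (hε0 : 0 < ε)
    (m : ℕ) (hm : 0 < m) (hT : Shatters H m) : ApproxShatters H ε m := by
  obtain ⟨t, ht⟩ := hT
  refine ⟨t, fun y hy => ?_⟩
  obtain ⟨h, hh, hr⟩ := ht y hy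
  refine ⟨h, hh, ?_⟩
  rw [Finset.filter_false_of_mem (fun i _ => not_not.2 (hr i))]
  have : (0 : ℝ) < m := by exact_mod_cast hm
  simp only [Finset.card_empty, Nat.cast_zero]
  positivity

/-- for fixed `0 < ε < 1/2`, finiteness of the Littlestone dimension, the
Threshold dimension, the ε-virtual Littlestone dimension, the ε-virtual Threshold
dimension, and the ε-approximate Littlestone dimension are all equivalent. -/
theorem stmt_10 {X : Type*} (H : Set (X → Bool)) (ε : ℝ) (hε0 : 0 < ε) (hε : ε < 1/2) :
    List.TFAE [
      Ldim H ≠ ⊤,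
      (∃ k : ℕ, ∀ m : ℕ, ThresholdAt H m → m ≤ k),
      (∃ k : ℕ, ∀ m : ℕ, VirtShatters H ε m → m ≤ k),
      (∃ k : ℕ, ∀ m : ℕ, VirtThresholdAt H ε m → m ≤ k),
      (∃ k : ℕ, ∀ m : ℕ, ApproxShatters H ε m → m ≤ k)
    ] := by
  by_cases hX : Nonempty X
  · tfae_have 1 ↔ 2 := (Ldim_ne_top_iff H).trans (threshold_bdd_iff H).symm
    tfae_have 1 → 3 := fun h => by
      obtain ⟨d, hd⟩ := (Ldim_ne_top_iff H).1 h
      exact virt_bdd H ε hε d hd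
    tfae_have 1 → 5 := fun h => by
      obtain ⟨d, hd⟩ := (Ldim_ne_top_iff H).1 h
      exact approx_bdd H ε hε d hd
    tfae_have 3 → 4 := virt_threshold H ε
    tfae_have 4 → 2 := fun ⟨k, hk⟩ => ⟨k, fun m hm => hk m (threshold_virt H ε hε0 hε m hm)⟩
    tfae_have 5 → 1 := fun ⟨k, hk⟩ => by
      refine (Ldim_ne_top_iff H).2 ⟨k + 1, fun hL => ?_⟩
      have := hk _ (shatters_approx H ε hε0 (k + 1) (by omega) (LDr_shatters _ _ hL))
      omega
    tfae_finish
  · have hno : ∀ d, ¬ LDr Set.univ (d + 1) H := by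
      rintro d ⟨x, _⟩
      exact hX ⟨x⟩
    have h1 : Ldim H ≠ ⊤ := by
      have he : {d : WithBot ℕ∞ | ∃ n : ℕ, Shatters H n ∧ d = ((n : ℕ∞) : WithBot ℕ∞)} = ∅ := by
        ext d
        simp only [Set.mem_setOf_eq, Set.mem_empty_iff_false, iff_false]
        rintro ⟨n, ⟨t, _⟩, _⟩
        exact hX ⟨t []⟩
      unfold Ldim
      rw [he, sSup_empty]
      exact bot_ne_top
    have h3 := virt_bdd H ε hε 1 (hno 0)
    have h4 := virt_threshold H ε h3
    have h2 : ∃ k : ℕ, ∀ m : ℕ, ThresholdAt H m → m ≤ k := by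
      obtain ⟨k, hk⟩ := h4
      exact ⟨k, fun m hm => hk m (threshold_virt H ε hε0 hε m hm)⟩
    have h5 := approx_bdd H ε hε 1 (hno 0)
    tfae_have 1 ↔ 2 := iff_of_true h1 h2
    tfae_have 1 ↔ 3 := iff_of_true h1 h3
    tfae_have 1 ↔ 4 := iff_of_true h1 h4
    tfae_have 1 ↔ 5 := iff_of_true h1 h5
    tfae_finish
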